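/- arXiv:2103.00277 — 2 statements merged into one kernel-verified Lean document; each statement's English description precedes it below -/
import Mathlib

section
/- For every n ≥ 1, the precision matrices of the linear UKI iteration satisfy the Loewner-order sandwich bound ½ Gᵀ Σ_η⁻¹ G ⪯ C_n⁻¹ ⪯ ½ Gᵀ Σ_η⁻¹ G + Σ_+, where Σ_+ := ½ Gᵀ Σ_η⁻¹ G + C_0⁻¹. -/
open Matrix

/-! By the Woodbury identity the Kalman covariance update is additive on precisions: it sends `P⁻¹`
to `P⁻¹ + M`, where `M = Gᴴ * R⁻¹ * G`. Preceded by the inflation `P ↦ a • P`, it acts on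
`X = P⁻¹` as `X ↦ a⁻¹ • X + M`. One such step already gives the lower bound `M`, since `X` is
positive. For `1 < a` the fixed point is `M + (a - 1)⁻¹ • M`; raised by the initial precision `X₀`
it is an upper bound for `X₀`, and the step preserves it because it contracts `X₀` to
`a⁻¹ • X₀ ⪯ X₀`. The UKI is the case `a = 2`, `R = 2 • Sη`. -/

section KalmanUpdate

variable {ι κ K : Type*} [Fintype ι] [Fintype κ] [DecidableEq κ] [CommRing K] [Star K]

/-- The information matrix `Gᴴ R⁻¹ G`: the precision gained by observing the state through `G` with
noise covariance `R`. -/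
noncomputable def observationInformation (G : Matrix κ ι K) (R : Matrix κ κ K) : Matrix ι ι K :=
  Gᴴ * R⁻¹ * G

/-- The Kalman (analysis) update of the state covariance `P` after an observation through `G` with
noise covariance `R`, in gain form, which inverts neither `P` nor `R`. -/
noncomputable def kalmanUpdate (G : Matrix κ ι K) (R : Matrix κ κ K) (P : Matrix ι ι K) :
    Matrix ι ι K :=
  P - P * Gᴴ * (G * P * Gᴴ + R)⁻¹ * G * P

theorem kalmanUpdate_eq_inv [DecidableEq ι] {G : Matrix κ ι K} {R : Matrix κ κ K}
    {P : Matrix ι ι K} (hR : IsUnit R) (hP : IsUnit P) (hS : IsUnit (G * P * Gᴴ + R)) :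
    kalmanUpdate G R P = (P⁻¹ + observationInformation G R)⁻¹ := by
  have hR' : R⁻¹⁻¹ = R := nonsing_inv_nonsing_inv R ((isUnit_iff_isUnit_det R).1 hR)
  have hP' : P⁻¹⁻¹ = P := nonsing_inv_nonsing_inv P ((isUnit_iff_isUnit_det P).1 hP)
  have woodbury := add_mul_mul_inv_eq_sub P⁻¹ Gᴴ R⁻¹ G (isUnit_nonsing_inv_iff.2 hP)
    (isUnit_nonsing_inv_iff.2 hR) (by rwa [hR', hP', add_comm])
  rw [kalmanUpdate, observationInformation, woodbury, hR', hP', add_comm R]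

end KalmanUpdate

section Scaling

variable {ι κ K : Type*} [Fintype κ] [DecidableEq κ] [Field K]

theorem inv_smul_matrix (a : K) (A : Matrix κ κ K) : (a • A)⁻¹ = a⁻¹ • A⁻¹ := by
  obtain rfl | ha := eq_or_ne a 0
  · simp
  by_cases hA : IsUnit A.det
  · exact inv_smul' A (Units.mk0 a ha) hA
  · have haA : ¬IsUnit (a • A).det := by simpa [ha] using hA
    rw [nonsing_inv_apply_not_isUnit _ hA, nonsing_inv_apply_not_isUnit _ haA, smul_zero]

theorem observationInformation_smul [Star K] (a : K) (G : Matrix κ ι K) (R : Matrix κ κ K) :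
    observationInformation G (a • R) = a⁻¹ • observationInformation G R := by
  simp only [observationInformation, inv_smul_matrix, Matrix.mul_smul, Matrix.smul_mul]

end Scaling

section Positivity

variable {ι κ K : Type*} [Fintype κ] [DecidableEq κ] [Field K] [PartialOrder K] [StarRing K]
  {R : Matrix κ κ K}

theorem posSemidef_observationInformation [Finite ι] (hR : R.PosDef) (G : Matrix κ ι K) :
    (observationInformation G R).PosSemidef :=
  have := Fintype.ofFinite ι
  hR.inv.posSemidef.conjTranspose_mul_mul_same G

variable [Fintype ι] [AddLeftMono K] {P : Matrix ι ι K}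

theorem kalmanUpdate_eq_inv_of_posDef [DecidableEq ι] (hR : R.PosDef) (hP : P.PosDef)
    (G : Matrix κ ι K) : kalmanUpdate G R P = (P⁻¹ + observationInformation G R)⁻¹ := by
  have hS : (G * P * Gᴴ + R).PosDef :=
    .posSemidef_add (hP.posSemidef.mul_mul_conjTranspose_same G) hR
  exact kalmanUpdate_eq_inv hR.isUnit hP.isUnit hS.isUnit

theorem posDef_inv_add_observationInformation [DecidableEq ι] (hR : R.PosDef)
    (hP : P.PosDef) (G : Matrix κ ι K) : (P⁻¹ + observationInformation G R).PosDef :=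
  hP.inv.add_posSemidef (posSemidef_observationInformation hR G)

theorem posDef_kalmanUpdate (hR : R.PosDef) (hP : P.PosDef) (G : Matrix κ ι K) :
    (kalmanUpdate G R P).PosDef := by
  classical
  rw [kalmanUpdate_eq_inv_of_posDef hR hP G]
  exact (posDef_inv_add_observationInformation hR hP G).inv

theorem inv_kalmanUpdate [DecidableEq ι] (hR : R.PosDef) (hP : P.PosDef)
    (G : Matrix κ ι K) : (kalmanUpdate G R P)⁻¹ = P⁻¹ + observationInformation G R := by
  have hX := (posDef_inv_add_observationInformation hR hP G).isUnit
  rw [kalmanUpdate_eq_inv_of_posDef hR hP G,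
    nonsing_inv_nonsing_inv _ ((isUnit_iff_isUnit_det _).1 hX)]

end Positivity

section Iteration

variable {ι κ K : Type*} [Field K] [PartialOrder K] [StarRing K] [StarOrderedRing K] {a : K}

-- `inv_nonneg` asks for `PosMulReflectLT K`, which is not inferred from `StarOrderedRing K`.
theorem inv_nonneg_of_starOrderedRing (ha : 0 ≤ a) : 0 ≤ a⁻¹ := by
  obtain rfl | ha' := eq_or_ne a 0
  · simp
  simpa [ha.isSelfAdjoint.star_eq, ha'] using star_left_conjugate_nonneg ha a⁻¹

theorem posSemidef_fixedPoint_add_sub_of_contraction {M : Matrix ι ι K} {X : ℕ → Matrix ι ι K}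
    (ha : 1 < a) (hM : M.PosSemidef) (hX0 : (X 0).PosSemidef)
    (hX : ∀ n, X (n + 1) = a⁻¹ • X n + M) (n : ℕ) :
    (M + ((a - 1)⁻¹ • M + X 0) - X n).PosSemidef := by
  have ha0 : 0 ≤ a := zero_le_one.trans ha.le
  have ha1 : a - 1 ≠ 0 := sub_ne_zero.2 ha.ne'
  have ha_ne : a ≠ 0 := (zero_lt_one.trans ha).ne'
  have inv_a_nonneg : 0 ≤ a⁻¹ := inv_nonneg_of_starOrderedRing ha0
  have inv_sub_nonneg : 0 ≤ (a - 1)⁻¹ := inv_nonneg_of_starOrderedRing (sub_nonneg.2 ha.le)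
  induction n with
  | zero =>
    rw [← add_assoc, add_sub_cancel_right]
    exact hM.add (hM.smul inv_sub_nonneg)
  | succ n ih =>
    have one_sub_inv_nonneg : 0 ≤ 1 - a⁻¹ := by
      simpa [sub_mul, ha_ne] using mul_nonneg (sub_nonneg.2 ha.le) inv_a_nonneg
    have gap_succ : M + ((a - 1)⁻¹ • M + X 0) - X (n + 1) =
        a⁻¹ • (M + ((a - 1)⁻¹ • M + X 0) - X n) + (1 - a⁻¹) • X 0 := by
      rw [hX]
      match_scalars <;> field_simp <;> ring
    rw [gap_succ]
    exact (ih.smul inv_a_nonneg).add (hX0.smul one_sub_inv_nonneg)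

variable [Fintype ι] [Fintype κ] [DecidableEq κ] {G : Matrix κ ι K} {R : Matrix κ κ K}
  {C : ℕ → Matrix ι ι K}

theorem posDef_of_kalmanUpdate_smul (ha : 0 < a) (hR : R.PosDef) (hC0 : (C 0).PosDef)
    (hC : ∀ n, C (n + 1) = kalmanUpdate G R (a • C n)) (n : ℕ) : (C n).PosDef := by
  induction n with
  | zero => exact hC0
  | succ n ih => exact hC n ▸ posDef_kalmanUpdate hR (ih.smul ha) G

theorem linear_uki_precision_sandwich_general [DecidableEq ι] (ha : 1 < a) (hR : R.PosDef)
    (hC0 : (C 0).PosDef) (hC : ∀ n, C (n + 1) = kalmanUpdate G R (a • C n))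
    (n : ℕ) (hn : 1 ≤ n) :
    ((C n)⁻¹ - observationInformation G R).PosSemidef ∧
      (observationInformation G R + ((a - 1)⁻¹ • observationInformation G R + (C 0)⁻¹) -
        (C n)⁻¹).PosSemidef := by
  have ha0 : 0 < a := zero_lt_one.trans ha
  have hpos : ∀ n, (C n).PosDef := posDef_of_kalmanUpdate_smul ha0 hR hC0 hC
  have precision_succ (n : ℕ) : (C (n + 1))⁻¹ = a⁻¹ • (C n)⁻¹ + observationInformation G R := by
    rw [hC, inv_kalmanUpdate hR ((hpos n).smul ha0), inv_smul_matrix]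
  constructor
  · obtain ⟨m, rfl⟩ := Nat.exists_eq_add_of_le' hn
    rw [precision_succ, add_sub_cancel_right]
    exact (hpos m).inv.posSemidef.smul (inv_nonneg_of_starOrderedRing ha0.le)
  · exact posSemidef_fixedPoint_add_sub_of_contraction (X := fun n ↦ (C n)⁻¹) ha
      (posSemidef_observationInformation hR G) hC0.inv.posSemidef precision_succ n

end Iteration

/-- **Sandwich bound for the linear UKI precision matrices.** For the linear UKI covariance
iteration (with `Σ_ω = C_n`, `Σ_ν = 2Σ_η`) and every `n ≥ 1`, the precision matrix satisfies
`½ Gᵀ Σ_η⁻¹ G ⪯ C_n⁻¹ ⪯ ½ Gᵀ Σ_η⁻¹ G + Σ_+` with `Σ_+ = ½ Gᵀ Σ_η⁻¹ G + C_0⁻¹` in the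
Loewner order. -/
theorem linear_uki_precision_sandwich {Nθ Ny : ℕ}
    (G : Matrix (Fin Ny) (Fin Nθ) ℝ)
    (Sη : Matrix (Fin Ny) (Fin Ny) ℝ) (hSη : Sη.PosDef)
    (C : ℕ → Matrix (Fin Nθ) (Fin Nθ) ℝ) (hC0 : (C 0).PosDef)
    (hrec : ∀ n, C (n + 1) =
      (2 : ℝ) • C n -
        ((2 : ℝ) • C n) * Gᵀ * (G * ((2 : ℝ) • C n) * Gᵀ + (2 : ℝ) • Sη)⁻¹ * G *
          ((2 : ℝ) • C n)) :
    ∀ n, 1 ≤ n →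
      ((C n)⁻¹ - (2 : ℝ)⁻¹ • (Gᵀ * Sη⁻¹ * G)).PosSemidef ∧
      (((2 : ℝ)⁻¹ • (Gᵀ * Sη⁻¹ * G) + ((2 : ℝ)⁻¹ • (Gᵀ * Sη⁻¹ * G) + (C 0)⁻¹)) -
        (C n)⁻¹).PosSemidef := by
  have information : observationInformation G ((2 : ℝ) • Sη) = (2 : ℝ)⁻¹ • (Gᵀ * Sη⁻¹ * G) :=
    observationInformation_smul 2 G Sη
  have hC (n : ℕ) : C (n + 1) = kalmanUpdate G ((2 : ℝ) • Sη) ((2 : ℝ) • C n) := hrec n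
  simpa only [information, show (2 : ℝ) - 1 = 1 by norm_num, inv_one, one_smul] using
    linear_uki_precision_sandwich_general one_lt_two (hSη.smul two_pos) hC0 hC
end

section
/- Assume G has trivial null space. Given y ∈ ℝ^{N_y} and an arbitrary initial mean m_0 ∈ ℝ^{N_θ}, define the linear UKI mean iteration m_{n+1} = m_n + C_{n+1} Gᵀ (2Σ_η)⁻¹ (y − G m_n), where C_n is the linear UKI covariance iteration. Then the sequence (m_n) converges exponentially fast to a limit m_∞: there exist K > 0 and r ∈ (0,1) with ‖m_n − m_∞‖ ≤ K rⁿ for all n, and the limit satisfies Gᵀ Σ_η⁻¹ (y − G m_∞) = 0, i.e. m_∞ is a minimizer of the least-squares functional Φ(θ) = ½ ‖Σ_η^{-1/2}(y − G θ)‖². -/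
open Matrix

/-!
In terms of precisions the covariance iteration is affine: with `A = Gᴴ Σ_η⁻¹ G`, the Woodbury
identity gives `C_{n+1}⁻¹ = (C_n⁻¹ + A) / 2`. If `θ` solves the normal equations, it follows that
`C_{n+1}⁻¹ (m_{n+1} - θ) = C_n⁻¹ (m_n - θ) / 2`, hence `m_n - θ = 2⁻ⁿ C_n C_0⁻¹ (m_0 - θ)`.

When `G` has a null space, `C_n` grows like `2ⁿ` along it and the limit depends on `m_0`: among the
solutions of the normal equations it is the one with `m_0 - θ = C_0 A w` for some `w`. For this `θ`
the error is `2⁻ⁿ (w - 2⁻ⁿ C_n (C_0⁻¹ - A) w)`, whose second factor is bounded because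
`0 ≤ 2⁻ⁿ C_n ≤ C_0` in the Loewner order.
-/

section LoewnerBound

open scoped ComplexOrder MatrixOrder

variable {ι 𝕜 : Type*} [RCLike 𝕜]

theorem norm_sq_apply_le_of_posSemidef {M : Matrix ι ι 𝕜} (hM : M.PosSemidef) (i j : ι) :
    ‖M i j‖ ^ 2 ≤ RCLike.re (M i i) * RCLike.re (M j j) := by
  have hre (k : ι) : (RCLike.re (M k k) : 𝕜) = M k k := hM.isHermitian.coe_re_apply_self k
  have hdet : (M.submatrix ![i, j] ![i, j]).det =
      (RCLike.re (M i i) * RCLike.re (M j j) - ‖M i j‖ ^ 2 : ℝ) := by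
    rw [RCLike.ofReal_sub, RCLike.ofReal_mul, RCLike.ofReal_pow, hre, hre, ← RCLike.mul_conj,
      ← RCLike.star_def, hM.isHermitian.apply j i]
    exact det_fin_two _
  have hdet_nonneg := (hM.submatrix ![i, j]).det_nonneg
  rwa [hdet, RCLike.ofReal_nonneg, sub_nonneg] at hdet_nonneg

variable [Fintype ι]

theorem norm_apply_le_re_trace {M : Matrix ι ι 𝕜} (hM : M.PosSemidef) (i j : ι) :
    ‖M i j‖ ≤ RCLike.re M.trace := by
  have hdiag (k : ι) : 0 ≤ RCLike.re (M k k) := (RCLike.nonneg_iff.1 hM.diag_nonneg).1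
  have htrace (k : ι) : RCLike.re (M k k) ≤ RCLike.re M.trace := by
    rw [trace, map_sum]
    exact Finset.single_le_sum (fun l _ => hdiag l) (Finset.mem_univ k)
  have htrace_nonneg := (hdiag i).trans (htrace i)
  refine le_of_sq_le_sq ?_ htrace_nonneg
  calc ‖M i j‖ ^ 2
    _ ≤ RCLike.re (M i i) * RCLike.re (M j j) := norm_sq_apply_le_of_posSemidef hM i j
    _ ≤ RCLike.re M.trace * RCLike.re M.trace :=
      mul_le_mul (htrace i) (htrace j) (hdiag j) htrace_nonneg
    _ = RCLike.re M.trace ^ 2 := (sq _).symm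

theorem norm_mulVec_le_of_nonneg_of_le {M N : Matrix ι ι 𝕜} (hM : 0 ≤ M) (hMN : M ≤ N)
    (x : ι → 𝕜) : ‖M *ᵥ x‖ ≤ RCLike.re N.trace * ∑ j, ‖x j‖ := by
  have hMpsd : M.PosSemidef := nonneg_iff_posSemidef.1 hM
  have htrace : RCLike.re M.trace ≤ RCLike.re N.trace := by
    have h := (RCLike.nonneg_iff.1 (le_iff.1 hMN).trace_nonneg).1
    rwa [trace_sub, map_sub, sub_nonneg] at h
  have htrace_nonneg : 0 ≤ RCLike.re N.trace :=
    (RCLike.nonneg_iff.1 hMpsd.trace_nonneg).1.trans htrace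
  refine (pi_norm_le_iff_of_nonneg (by positivity)).2 fun i => ?_
  calc ‖∑ j, M i j * x j‖
    _ ≤ ∑ j, ‖M i j‖ * ‖x j‖ := norm_sum_le_of_le _ fun j _ => norm_mul_le _ _
    _ ≤ ∑ j, RCLike.re N.trace * ‖x j‖ := by
      gcongr with j
      exact (norm_apply_le_re_trace hMpsd i j).trans htrace
    _ = RCLike.re N.trace * ∑ j, ‖x j‖ := (Finset.mul_sum ..).symm

end LoewnerBound

section Precision

variable {ι κ R : Type*} [Fintype κ] [DecidableEq κ]

theorem inv_smul_of_isUnit {k : Type*} [Field k] [CommRing R] [Algebra k R] {c : k} (hc : c ≠ 0)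
    {S : Matrix κ κ R} (hS : IsUnit S) : (c • S)⁻¹ = c⁻¹ • S⁻¹ := by
  refine inv_eq_left_inv ?_
  rw [smul_mul_smul_comm, inv_mul_cancel₀ hc, one_smul,
    nonsing_inv_mul S ((isUnit_iff_isUnit_det S).1 hS)]

/-- The information (precision) that an observation through `G` with noise covariance `S` adds
to a Gaussian prior. -/
noncomputable def informationMatrix [CommRing R] [StarRing R] (G : Matrix κ ι R)
    (S : Matrix κ κ R) : Matrix ι ι R :=
  Gᴴ * S⁻¹ * G

theorem posSemidef_informationMatrix [Finite ι] [CommRing R] [PartialOrder R] [StarRing R]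
    {S : Matrix κ κ R} (hS : S.PosSemidef) (G : Matrix κ ι R) :
    (informationMatrix G S).PosSemidef := by
  have := Fintype.ofFinite ι
  exact hS.inv.conjTranspose_mul_mul_same G

variable [Fintype ι]

/-- The Kalman analysis covariance: the posterior covariance of a Gaussian prior of covariance `H`
after an observation through `G` with noise covariance `S`. -/
noncomputable def kalmanCovariance [CommRing R] [StarRing R] (G : Matrix κ ι R)
    (S : Matrix κ κ R) (H : Matrix ι ι R) : Matrix ι ι R :=
  H - H * Gᴴ * (G * H * Gᴴ + S)⁻¹ * G * H

theorem mulVec_residual_eq [CommRing R] [StarRing R] {G : Matrix κ ι R} {S : Matrix κ κ R}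
    {y : κ → R} {θ : ι → R} (hθ : (Gᴴ * S⁻¹) *ᵥ (y - G *ᵥ θ) = 0) (x : ι → R) :
    (Gᴴ * S⁻¹) *ᵥ (y - G *ᵥ x) = -(informationMatrix G S *ᵥ (x - θ)) := by
  have hy : (Gᴴ * S⁻¹) *ᵥ y = informationMatrix G S *ᵥ θ := by
    rwa [mulVec_sub, mulVec_mulVec, sub_eq_zero] at hθ
  rw [mulVec_sub, mulVec_mulVec, hy, ← informationMatrix, mulVec_sub, neg_sub]

theorem posSemidef_sub_kalmanCovariance [CommRing R] [PartialOrder R] [StarRing R] [AddLeftMono R]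
    {S : Matrix κ κ R} {H : Matrix ι ι R} (hS : S.PosSemidef) (hH : H.PosSemidef)
    (G : Matrix κ ι R) : (H - kalmanCovariance G S H).PosSemidef := by
  have hinnov := (hH.mul_mul_conjTranspose_same G).add hS
  have h := hinnov.inv.conjTranspose_mul_mul_same (G * H)
  rwa [conjTranspose_mul, hH.isHermitian.eq, ← Matrix.mul_assoc _ G H,
    ← sub_sub_cancel H (_ * H)] at h

variable [Field R] [PartialOrder R] [StarRing R] [AddLeftMono R]
  {S : Matrix κ κ R} {H : Matrix ι ι R}

theorem kalmanCovariance_eq_inv [DecidableEq ι] (hS : S.PosDef) (hH : H.PosDef)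
    (G : Matrix κ ι R) : kalmanCovariance G S H = (H⁻¹ + informationMatrix G S)⁻¹ := by
  have hHH : H⁻¹⁻¹ = H := nonsing_inv_nonsing_inv H ((isUnit_iff_isUnit_det H).1 hH.isUnit)
  have hSS : S⁻¹⁻¹ = S := nonsing_inv_nonsing_inv S ((isUnit_iff_isUnit_det S).1 hS.isUnit)
  have hinnov : IsUnit (S⁻¹⁻¹ + G * H⁻¹⁻¹ * Gᴴ) := by
    rw [hSS, hHH]
    exact (hS.add_posSemidef (hH.posSemidef.mul_mul_conjTranspose_same G)).isUnit
  rw [informationMatrix, add_mul_mul_inv_eq_sub _ _ _ _ hH.inv.isUnit hS.inv.isUnit hinnov,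
    hSS, hHH, add_comm S, kalmanCovariance]

theorem posDef_kalmanCovariance (hS : S.PosDef) (hH : H.PosDef) (G : Matrix κ ι R) :
    (kalmanCovariance G S H).PosDef := by
  classical
  rw [kalmanCovariance_eq_inv hS hH]
  exact (hH.inv.add_posSemidef (posSemidef_informationMatrix hS.posSemidef G)).inv

theorem inv_kalmanCovariance [DecidableEq ι] (hS : S.PosDef) (hH : H.PosDef)
    (G : Matrix κ ι R) : (kalmanCovariance G S H)⁻¹ = H⁻¹ + informationMatrix G S := by
  have hpos := hH.inv.add_posSemidef (posSemidef_informationMatrix hS.posSemidef G)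
  rw [kalmanCovariance_eq_inv hS hH,
    nonsing_inv_nonsing_inv _ ((isUnit_iff_isUnit_det _).1 hpos.isUnit)]

end Precision

section NormalEquation

variable {ι κ R : Type*} [Fintype ι] [Fintype κ]
  [Field R] [PartialOrder R] [StarRing R]

theorem ker_mulVecLin_conjTranspose_mul_mul_same {P : Matrix κ κ R} (hP : P.PosDef)
    (B : Matrix κ ι R) : (Bᴴ * P * B).mulVecLin.ker = B.mulVecLin.ker := by
  ext x
  simp only [LinearMap.mem_ker, mulVecLin_apply]
  have hquad : star (B *ᵥ x) ⬝ᵥ P *ᵥ (B *ᵥ x) = star x ⬝ᵥ (Bᴴ * P * B) *ᵥ x := by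
    simp only [star_mulVec, ← dotProduct_mulVec, mulVec_mulVec, Matrix.mul_assoc]
  refine ⟨fun hx => by_contra fun hBx => (hP.dotProduct_mulVec_pos hBx).ne' ?_, fun hx => ?_⟩
  · rw [hquad, hx, dotProduct_zero]
  · rw [← mulVec_mulVec, hx, mulVec_zero]

variable [StarOrderedRing R]

theorem range_mulVecLin_conjTranspose_mul_mul_same {P : Matrix κ κ R} (hP : P.PosDef)
    (B : Matrix κ ι R) : (Bᴴ * P * B).mulVecLin.range = Bᴴ.mulVecLin.range := by
  have hrank : (Bᴴ * P * B).rank = Bᴴ.rank := by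
    have hrank_nullity := (Bᴴ * P * B).mulVecLin.finrank_range_add_finrank_ker
    rw [ker_mulVecLin_conjTranspose_mul_mul_same hP,
      ← B.mulVecLin.finrank_range_add_finrank_ker] at hrank_nullity
    rw [rank_conjTranspose]
    exact Nat.add_right_cancel hrank_nullity
  refine Submodule.eq_of_le_of_finrank_eq ?_ hrank
  rw [Matrix.mul_assoc, mulVecLin_mul]
  exact LinearMap.range_comp_le_range _ _

variable [DecidableEq κ] {S : Matrix κ κ R} {C : Matrix ι ι R}

theorem exists_normalEq_sub_mulVec (hS : S.PosDef) (hC : C.PosDef) (G : Matrix κ ι R)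
    (y : κ → R) (x : ι → R) :
    ∃ w, (Gᴴ * S⁻¹) *ᵥ (y - G *ᵥ (x - C *ᵥ informationMatrix G S *ᵥ w)) = 0 := by
  set A := informationMatrix G S with hA
  have hAherm : Aᴴ = A := (posSemidef_informationMatrix hS.posSemidef G).isHermitian
  have hrange : (A * C * A).mulVecLin.range = Gᴴ.mulVecLin.range := by
    have hACA := range_mulVecLin_conjTranspose_mul_mul_same hC A
    rw [hAherm] at hACA
    exact hACA.trans (range_mulVecLin_conjTranspose_mul_mul_same hS.inv G)
  obtain ⟨w, hw⟩ : Gᴴ *ᵥ S⁻¹ *ᵥ (G *ᵥ x - y) ∈ (A * C * A).mulVecLin.range :=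
    hrange ▸ ⟨_, rfl⟩
  refine ⟨w, ?_⟩
  calc (Gᴴ * S⁻¹) *ᵥ (y - G *ᵥ (x - C *ᵥ A *ᵥ w))
    _ = (A * C * A) *ᵥ w - Gᴴ *ᵥ S⁻¹ *ᵥ (G *ᵥ x - y) := by
      simp only [hA, informationMatrix, mulVec_sub, mulVec_mulVec, Matrix.mul_assoc]
      abel
    _ = 0 := sub_eq_zero.2 hw

end NormalEquation

section UKI

open scoped ComplexOrder MatrixOrder

variable {ι κ 𝕜 : Type*} [Fintype ι] [Fintype κ] [DecidableEq κ] [RCLike 𝕜]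

/-- The linear UKI covariance iteration with hyperparameters `Σ_ω = C_n` and `Σ_ν = 2 Σ_η`, as a
property of the sequence of covariances; `Σ_η` is `S`. -/
def IsUKICovariance (G : Matrix κ ι 𝕜) (S : Matrix κ κ 𝕜) (C : ℕ → Matrix ι ι 𝕜) : Prop :=
  ∀ n, C (n + 1) = kalmanCovariance G ((2 : ℝ) • S) ((2 : ℝ) • C n)

/-- The linear UKI mean iteration for the data `y` driven by the covariances `C`, as a property
of the sequence of means. -/
def IsUKIMean (G : Matrix κ ι 𝕜) (S : Matrix κ κ 𝕜) (C : ℕ → Matrix ι ι 𝕜) (y : κ → 𝕜)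
    (m : ℕ → ι → 𝕜) : Prop :=
  ∀ n, m (n + 1) = m n + (C (n + 1) * Gᴴ * ((2 : ℝ) • S)⁻¹) *ᵥ (y - G *ᵥ m n)

variable {G : Matrix κ ι 𝕜} {S : Matrix κ κ 𝕜} {C : ℕ → Matrix ι ι 𝕜}

namespace IsUKICovariance

theorem posDef (hC : IsUKICovariance G S C) (hS : S.PosDef) (hC0 : (C 0).PosDef)
    (n : ℕ) : (C n).PosDef := by
  induction n with
  | zero => exact hC0
  | succ n ih =>
    rw [hC n]
    exact posDef_kalmanCovariance (hS.smul two_pos) (ih.smul two_pos) G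

theorem smul_le (hC : IsUKICovariance G S C) (hS : S.PosDef) (hC0 : (C 0).PosDef)
    (n : ℕ) : (2⁻¹ : ℝ) ^ n • C n ≤ C 0 := by
  induction n with
  | zero => rw [pow_zero, one_smul]
  | succ n ih =>
    have hstep : C (n + 1) ≤ (2 : ℝ) • C n := by
      rw [hC n]
      exact le_iff.2 (posSemidef_sub_kalmanCovariance (hS.smul two_pos).posSemidef
        ((hC.posDef hS hC0 n).smul two_pos).posSemidef G)
    refine le_trans ?_ ih
    rw [le_iff] at hstep ⊢
    have h := hstep.smul (a := (2⁻¹ : ℝ) ^ (n + 1)) (by positivity)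
    rwa [smul_sub, smul_smul, pow_succ, mul_assoc, inv_mul_cancel₀ two_ne_zero, mul_one] at h

variable [DecidableEq ι]

theorem inv_succ (hC : IsUKICovariance G S C) (hS : S.PosDef) (hC0 : (C 0).PosDef) (n : ℕ) :
    (C (n + 1))⁻¹ = (2⁻¹ : ℝ) • ((C n)⁻¹ + informationMatrix G S) := by
  have hCn := hC.posDef hS hC0 n
  rw [hC n, inv_kalmanCovariance (hS.smul two_pos) (hCn.smul two_pos), informationMatrix,
    inv_smul_of_isUnit two_ne_zero hCn.isUnit, inv_smul_of_isUnit two_ne_zero hS.isUnit,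
    Matrix.mul_smul, Matrix.smul_mul, smul_add, informationMatrix]

theorem inv_sub (hC : IsUKICovariance G S C) (hS : S.PosDef) (hC0 : (C 0).PosDef) (n : ℕ) :
    (C n)⁻¹ - informationMatrix G S =
      (2⁻¹ : ℝ) ^ n • ((C 0)⁻¹ - informationMatrix G S) := by
  induction n with
  | zero => rw [pow_zero, one_smul]
  | succ n ih =>
    rw [pow_succ', mul_smul, ← ih, hC.inv_succ hS hC0]
    module

end IsUKICovariance

namespace IsUKIMean

variable {y : κ → 𝕜} {m : ℕ → ι → 𝕜} {θ : ι → 𝕜}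

theorem succ_sub (hm : IsUKIMean G S C y m) (hS : IsUnit S)
    (hθ : (Gᴴ * S⁻¹) *ᵥ (y - G *ᵥ θ) = 0) (n : ℕ) :
    m (n + 1) - θ =
      (m n - θ) - C (n + 1) *ᵥ (2⁻¹ : ℝ) • (informationMatrix G S *ᵥ (m n - θ)) := by
  rw [hm n, inv_smul_of_isUnit two_ne_zero hS, Matrix.mul_smul, Matrix.mul_assoc,
    smul_mulVec, ← mulVec_mulVec, mulVec_residual_eq hθ, mulVec_neg, mulVec_smul]
  module

variable [DecidableEq ι]

theorem inv_mulVec_sub (hm : IsUKIMean G S C y m) (hC : IsUKICovariance G S C) (hS : S.PosDef)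
    (hC0 : (C 0).PosDef) (hθ : (Gᴴ * S⁻¹) *ᵥ (y - G *ᵥ θ) = 0) (n : ℕ) :
    (C n)⁻¹ *ᵥ (m n - θ) = (2⁻¹ : ℝ) ^ n • ((C 0)⁻¹ *ᵥ (m 0 - θ)) := by
  induction n with
  | zero => rw [pow_zero, one_smul]
  | succ n ih =>
    have hdet := (isUnit_iff_isUnit_det _).1 (hC.posDef hS hC0 (n + 1)).isUnit
    rw [hm.succ_sub hS.isUnit hθ, mulVec_sub, mulVec_mulVec _ _ (C (n + 1)), nonsing_inv_mul _ hdet,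
      one_mulVec, hC.inv_succ hS hC0, smul_mulVec, add_mulVec, pow_succ', mul_smul, ← ih]
    module

theorem sub_eq_two_inv_pow_smul (hm : IsUKIMean G S C y m) (hC : IsUKICovariance G S C)
    (hS : S.PosDef) (hC0 : (C 0).PosDef) (hθ : (Gᴴ * S⁻¹) *ᵥ (y - G *ᵥ θ) = 0) {w : ι → 𝕜}
    (hw : m 0 - θ = C 0 *ᵥ informationMatrix G S *ᵥ w) (n : ℕ) :
    m n - θ = (2⁻¹ : ℝ) ^ n •
      (w - ((2⁻¹ : ℝ) ^ n • C n) *ᵥ ((C 0)⁻¹ - informationMatrix G S) *ᵥ w) := by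
  have hdet (k : ℕ) := (isUnit_iff_isUnit_det _).1 (hC.posDef hS hC0 k).isUnit
  set A := informationMatrix G S
  calc m n - θ
    _ = C n *ᵥ (C n)⁻¹ *ᵥ (m n - θ) := by
      rw [mulVec_mulVec, mul_nonsing_inv _ (hdet n), one_mulVec]
    _ = (2⁻¹ : ℝ) ^ n • (C n *ᵥ A *ᵥ w) := by
      rw [hm.inv_mulVec_sub hC hS hC0 hθ, hw, mulVec_mulVec _ _ (C 0),
        nonsing_inv_mul _ (hdet 0), one_mulVec, mulVec_smul]
    _ = (2⁻¹ : ℝ) ^ n • (w - C n *ᵥ ((C n)⁻¹ - A) *ᵥ w) := by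
      rw [sub_mulVec, mulVec_sub, mulVec_mulVec _ _ (C n)⁻¹, mul_nonsing_inv _ (hdet n),
        one_mulVec, sub_sub_cancel]
    _ = _ := by rw [hC.inv_sub hS hC0, smul_mulVec, smul_mulVec, mulVec_smul]

end IsUKIMean

theorem linear_uki_mean_convergence_general (hS : S.PosDef) (hC0 : (C 0).PosDef)
    (hC : IsUKICovariance G S C) {y : κ → 𝕜} {m : ℕ → ι → 𝕜}
    (hm : IsUKIMean G S C y m) :
    ∃ (θ : ι → 𝕜) (K : ℝ), 0 < K ∧ (∀ n, ‖m n - θ‖ ≤ K * 2⁻¹ ^ n) ∧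
      (Gᴴ * S⁻¹) *ᵥ (y - G *ᵥ θ) = 0 := by
  classical
  obtain ⟨w, hθ⟩ := exists_normalEq_sub_mulVec hS hC0 G y (m 0)
  set u := ((C 0)⁻¹ - informationMatrix G S) *ᵥ w
  set b := RCLike.re (C 0).trace * ∑ j, ‖u j‖
  have hbound (n : ℕ) : ‖((2⁻¹ : ℝ) ^ n • C n) *ᵥ u‖ ≤ b := by
    have hCn := (hC.posDef hS hC0 n).posSemidef.smul (a := (2⁻¹ : ℝ) ^ n) (by positivity)
    exact norm_mulVec_le_of_nonneg_of_le (nonneg_iff_posSemidef.2 hCn) (hC.smul_le hS hC0 n) u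
  have hb : 0 ≤ b := (norm_nonneg _).trans (hbound 0)
  refine ⟨_, ‖w‖ + b + 1, by positivity, fun n => ?_, hθ⟩
  rw [hm.sub_eq_two_inv_pow_smul hC hS hC0 hθ (sub_sub_cancel _ _), norm_smul, norm_pow, norm_inv,
    Real.norm_ofNat, mul_comm]
  gcongr
  exact (norm_sub_le_of_le le_rfl (hbound n)).trans (le_add_of_nonneg_right zero_le_one)

end UKI

/-- **Exponential convergence of the linear UKI mean iteration.** Assume `G` has trivial null
space. Given data `y` and an arbitrary initial mean `m_0`, the linear UKI mean iteration
`m_{n+1} = m_n + C_{n+1} Gᵀ (2Σ_η)⁻¹ (y − G m_n)` (where `C_n` is the linear UKI covariance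
iteration with `Σ_ω = C_n`, `Σ_ν = 2Σ_η`) converges exponentially fast to a limit `m_∞`
satisfying `Gᵀ Σ_η⁻¹ (y − G m_∞) = 0`, i.e. a minimizer of the least-squares functional
`Φ(θ) = ½‖Σ_η^{-1/2}(y − Gθ)‖²`. -/
theorem linear_uki_mean_convergence {Nθ Ny : ℕ}
    (G : Matrix (Fin Ny) (Fin Nθ) ℝ)
    (hG : ∀ x : Fin Nθ → ℝ, G.mulVec x = 0 → x = 0)
    (Sη : Matrix (Fin Ny) (Fin Ny) ℝ) (hSη : Sη.PosDef)
    (C : ℕ → Matrix (Fin Nθ) (Fin Nθ) ℝ) (hC0 : (C 0).PosDef)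
    (hrec : ∀ n, C (n + 1) =
      (2 : ℝ) • C n -
        ((2 : ℝ) • C n) * Gᵀ * (G * ((2 : ℝ) • C n) * Gᵀ + (2 : ℝ) • Sη)⁻¹ * G *
          ((2 : ℝ) • C n))
    (y : Fin Ny → ℝ) (m : ℕ → Fin Nθ → ℝ)
    (hm : ∀ n, m (n + 1) =
      m n + ((C (n + 1)) * Gᵀ * ((2 : ℝ) • Sη)⁻¹).mulVec (y - G.mulVec (m n))) :
    ∃ minf : Fin Nθ → ℝ, ∃ K r : ℝ, 0 < K ∧ r ∈ Set.Ioo (0 : ℝ) 1 ∧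
      (∀ n, ‖m n - minf‖ ≤ K * r ^ n) ∧
      (Gᵀ * Sη⁻¹).mulVec (y - G.mulVec minf) = 0 := by
  obtain ⟨minf, K, hK, hconv, hnormal⟩ := linear_uki_mean_convergence_general hSη hC0 hrec hm
  exact ⟨minf, K, 2⁻¹, hK, by norm_num, hconv, hnormal⟩
end
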